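/- Fix a positive integer $m$, $0<p<\infty$, and $1<\alpha<\infty$. For each positive integer $n$ let $p_{\alpha,n}(\mathbf{z})=\sqrt{\alpha/n}\sum_{i=1}^n z_i$. Then $\lim_{n\to\infty}\|p_{\alpha,n}^m\|_{A_\alpha^p(\mathbb{D}^n)}=\Gamma\left(\frac{mp}{2}+1\right)^{1/p}$, i.e. $\lim_{n\to\infty}\int_{\mathbb{D}^n}\left|\sqrt{\tfrac{\alpha}{n}}\sum_{i=1}^n z_i\right|^{mp}dA_\alpha(z_1)\cdots dA_\alpha(z_n)=\Gamma\left(\frac{mp}{2}+1\right)$. -/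

import Mathlib

open MeasureTheory Metric Filter

/-- The weighted Bergman measure `dA_α(z) = (α-1)(1-|z|²)^(α-2) dA(z)` on the unit disk,
where `dA = dx dy / π` is the normalized area measure. -/
noncomputable def bergmanMeasure (α : ℝ) : Measure ℂ :=
  ((volume : Measure ℂ).restrict (ball (0 : ℂ) 1)).withDensity
    fun z => ENNReal.ofReal ((α - 1) * (1 - ‖z‖ ^ 2) ^ (α - 2) / Real.pi)

/-- The product Bergman measure `dA_α(z₁) ⋯ dA_α(zₙ)` on the polydisc. -/
noncomputable def bergmanMeasurePi (n : ℕ) (α : ℝ) : Measure (Fin n → ℂ) :=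
  Measure.pi fun _ => bergmanMeasure α

lemma integral_Ioo_mul_one_sub_sq_rpow {β : ℝ} (hβ : 0 < β) :
    ∫ r in Set.Ioo (0 : ℝ) 1, r * (1 - r ^ 2) ^ (β - 1) = 1 / (2 * β) := by
  have hcont : ContinuousOn (fun r : ℝ => -(1 - r ^ 2) ^ β / (2 * β)) (Set.Icc 0 1) := by
    refine ContinuousOn.div_const (ContinuousOn.neg (ContinuousOn.rpow_const (by fun_prop) ?_)) _
    exact fun _ _ => Or.inr hβ.le
  have hderiv : ∀ r ∈ Set.Ioo (0 : ℝ) 1, HasDerivAt (fun r : ℝ => -(1 - r ^ 2) ^ β / (2 * β))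
      (r * (1 - r ^ 2) ^ (β - 1)) r := by
    intro r hr
    have h1 : 0 < 1 - r ^ 2 := by nlinarith [hr.1, hr.2]
    have h := (((hasDerivAt_pow 2 r).const_sub 1).rpow_const (p := β)
      (Or.inl h1.ne')).neg.div_const (2 * β)
    convert! h using 1
    field_simp
    norm_num
    ring
  have hint := intervalIntegral.integrableOn_deriv_of_nonneg hcont hderiv fun r hr => by
    have h1 : 0 < 1 - r ^ 2 := by nlinarith [hr.1, hr.2]
    have := hr.1
    positivity
  have := intervalIntegral.integral_eq_sub_of_hasDerivAt_of_le zero_le_one hcont hderiv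
    ((intervalIntegrable_iff_integrableOn_Ioc_of_le zero_le_one).2 hint)
  rw [← integral_Ioc_eq_integral_Ioo, ← intervalIntegral.integral_of_le zero_le_one, this]
  simp [Real.zero_rpow hβ.ne', neg_div]

lemma integral_ball_one_sub_norm_sq_rpow {β : ℝ} (hβ : 0 < β) :
    ∫ z in ball (0 : ℂ) 1, (1 - ‖z‖ ^ 2) ^ (β - 1) = Real.pi / β := by
  have h := integral_fun_norm_addHaar (volume : Measure ℂ)
    ((Set.Iio (1 : ℝ)).indicator fun r => (1 - r ^ 2) ^ (β - 1))
  have hball : ∀ z : ℂ, (Set.Iio (1 : ℝ)).indicator (fun r => (1 - r ^ 2) ^ (β - 1)) ‖z‖ =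
      (ball (0 : ℂ) 1).indicator (fun z => (1 - ‖z‖ ^ 2) ^ (β - 1)) z := by
    intro z
    simp [Set.indicator]
  simp_rw [hball] at h
  rw [integral_indicator measurableSet_ball] at h
  rw [h]
  have h2 : ∀ y : ℝ, y ^ (Module.finrank ℝ ℂ - 1) •
      (Set.Iio (1 : ℝ)).indicator (fun r => (1 - r ^ 2) ^ (β - 1)) y =
      (Set.Iio (1 : ℝ)).indicator (fun r => r * (1 - r ^ 2) ^ (β - 1)) y := by
    intro y
    simp [Set.indicator, Complex.finrank_real_complex]
  simp_rw [h2]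
  rw [setIntegral_indicator measurableSet_Iio, Set.Ioi_inter_Iio,
    integral_Ioo_mul_one_sub_sq_rpow hβ]
  simp [Measure.real, Complex.volume_ball, Complex.finrank_real_complex]
  field_simp

lemma integral_bergmanMeasure {E : Type*} [NormedAddCommGroup E] [NormedSpace ℝ E] {α : ℝ}
    (hα : 1 < α) (g : ℂ → E) :
    ∫ z, g z ∂(bergmanMeasure α) =
      ∫ z in ball (0 : ℂ) 1, ((α - 1) * (1 - ‖z‖ ^ 2) ^ (α - 2) / Real.pi) • g z := by
  rw [bergmanMeasure, integral_withDensity_eq_integral_toReal_smul (by fun_prop) (by simp)]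
  refine setIntegral_congr_fun measurableSet_ball fun z hz => ?_
  have h1 : ‖z‖ < 1 := by simpa using hz
  have h2 : 0 < 1 - ‖z‖ ^ 2 := by nlinarith [norm_nonneg z]
  have h3 : 0 < α - 1 := by linarith
  rw [ENNReal.toReal_ofReal (by positivity)]

lemma isProbabilityMeasure_bergmanMeasure {α : ℝ} (hα : 1 < α) :
    IsProbabilityMeasure (bergmanMeasure α) := by
  have h3 : 0 < α - 1 := by linarith
  have h := integral_bergmanMeasure hα fun _ => (1 : ℝ)
  have h1 := integral_ball_one_sub_norm_sq_rpow h3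
  rw [show α - 1 - 1 = α - 2 by ring] at h1
  simp only [smul_eq_mul, mul_one, mul_div_assoc, integral_const_mul, integral_div, h1,
    integral_const] at h
  rw [show (α - 1) * (Real.pi / (α - 1) / Real.pi) = 1 by field_simp, Measure.real,
    ENNReal.toReal_eq_one_iff] at h
  exact ⟨h⟩

lemma ae_bergmanMeasure_norm_lt_one (α : ℝ) : ∀ᵐ z ∂(bergmanMeasure α), ‖z‖ < 1 := by
  refine (withDensity_absolutelyContinuous _ _).ae_le ?_
  filter_upwards [ae_restrict_mem measurableSet_ball] with z hz
  simpa using hz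

lemma integral_norm_sq_bergmanMeasure {α : ℝ} (hα : 1 < α) :
    ∫ z, ‖z‖ ^ 2 ∂(bergmanMeasure α) = 1 / α := by
  have h3 : 0 < α - 1 := by linarith
  have h4 : 0 < α := by linarith
  have h1 := integral_ball_one_sub_norm_sq_rpow h3
  have h2 := integral_ball_one_sub_norm_sq_rpow h4
  have i1 : IntegrableOn (fun z : ℂ => (1 - ‖z‖ ^ 2) ^ (α - 1 - 1)) (ball (0 : ℂ) 1) :=
    .of_integral_ne_zero (by rw [h1]; positivity)
  have i2 : IntegrableOn (fun z : ℂ => (1 - ‖z‖ ^ 2) ^ (α - 1)) (ball (0 : ℂ) 1) :=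
    .of_integral_ne_zero (by rw [h2]; positivity)
  rw [integral_bergmanMeasure hα]
  have : ∫ z in ball (0 : ℂ) 1, ((α - 1) * (1 - ‖z‖ ^ 2) ^ (α - 2) / Real.pi) • ‖z‖ ^ 2 =
      ∫ z in ball (0 : ℂ) 1, ((α - 1) / Real.pi) *
        ((1 - ‖z‖ ^ 2) ^ (α - 1 - 1) - (1 - ‖z‖ ^ 2) ^ (α - 1)) := by
    refine setIntegral_congr_fun measurableSet_ball fun z hz => ?_
    have h1 : ‖z‖ < 1 := by simpa using hz
    have h2 : 0 < 1 - ‖z‖ ^ 2 := by nlinarith [norm_nonneg z]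
    simp only [smul_eq_mul]
    rw [show α - 1 - 1 = α - 2 by ring, show α - 1 = (α - 2) + 1 by ring, Real.rpow_add_one h2.ne']
    ring
  rw [this, integral_const_mul, integral_sub i1 i2, h1, h2]
  field_simp
  ring

lemma integral_comp_linearIsometryEquiv_bergmanMeasure {E : Type*} [NormedAddCommGroup E]
    [NormedSpace ℝ E] {α : ℝ} (hα : 1 < α) (e : ℂ ≃ₗᵢ[ℝ] ℂ) (g : ℂ → E) :
    ∫ z, g (e z) ∂(bergmanMeasure α) = ∫ z, g z ∂(bergmanMeasure α) := by
  rw [integral_bergmanMeasure hα, integral_bergmanMeasure hα,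
    ← integral_indicator measurableSet_ball, ← integral_indicator measurableSet_ball,
    ← e.measurePreserving.integral_comp e.toMeasurableEquiv.measurableEmbedding
      ((ball (0 : ℂ) 1).indicator fun z => ((α - 1) * (1 - ‖z‖ ^ 2) ^ (α - 2) / Real.pi) • g z)]
  congr with z
  simp [Set.indicator]

lemma integrable_bergmanMeasure_of_bound {α : ℝ} (hα : 1 < α) {f : ℂ → ℝ} (hf : Continuous f)
    (C : ℝ) (h : ∀ z, ‖z‖ < 1 → ‖f z‖ ≤ C) : Integrable f (bergmanMeasure α) := by
  have := isProbabilityMeasure_bergmanMeasure hα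
  refine .of_bound hf.aestronglyMeasurable C ?_
  filter_upwards [ae_bergmanMeasure_norm_lt_one α] with z hz using h z hz

lemma integral_inner_bergmanMeasure {α : ℝ} (hα : 1 < α) (t : ℂ) :
    ∫ z, inner ℝ z t ∂(bergmanMeasure α) = 0 := by
  have h := integral_comp_linearIsometryEquiv_bergmanMeasure hα (LinearIsometryEquiv.neg ℝ)
    fun z => inner ℝ z t
  simp only [LinearIsometryEquiv.coe_neg, inner_neg_left, integral_neg] at h
  linarith

lemma integral_inner_sq_bergmanMeasure {α : ℝ} (hα : 1 < α) (t : ℂ) :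
    ∫ z, (inner ℝ z t) ^ 2 ∂(bergmanMeasure α) = ‖t‖ ^ 2 / (2 * α) := by
  have hsum : ∀ z : ℂ, (inner ℝ z t) ^ 2 + (inner ℝ (Complex.I * z) t) ^ 2 =
      ‖t‖ ^ 2 * ‖z‖ ^ 2 := by
    intro z
    simp only [Complex.inner, Complex.sq_norm, Complex.normSq_apply]
    simp
    ring
  obtain ⟨c, hc⟩ : ∃ c : Circle, (c : ℂ) = Complex.I :=
    ⟨⟨Complex.I, mem_sphere_zero_iff_norm.2 (by simp)⟩, rfl⟩
  have h := integral_comp_linearIsometryEquiv_bergmanMeasure hα (rotation c)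
    fun z => (inner ℝ z t) ^ 2
  simp only [rotation_apply, hc] at h
  have hb : ∀ z w : ℂ, ‖z‖ < 1 → ‖w‖ = ‖z‖ → ‖(inner ℝ w t) ^ 2‖ ≤ ‖t‖ ^ 2 := by
    intro z w hz hw
    rw [norm_pow]
    have := norm_inner_le_norm (𝕜 := ℝ) w t
    gcongr
    nlinarith [norm_nonneg t]
  have h2 : ∫ z, ((inner ℝ z t) ^ 2 + (inner ℝ (Complex.I * z) t) ^ 2) ∂(bergmanMeasure α) =
      ‖t‖ ^ 2 * (1 / α) := by
    simp_rw [hsum]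
    rw [integral_const_mul, integral_norm_sq_bergmanMeasure hα]
  rw [integral_add (integrable_bergmanMeasure_of_bound hα (by fun_prop) (‖t‖ ^ 2)
      fun z hz => hb z z hz rfl) (integrable_bergmanMeasure_of_bound hα (by fun_prop) (‖t‖ ^ 2)
      fun z hz => hb z _ hz (by simp)), h] at h2
  have : 0 < α := by linarith
  field_simp at h2 ⊢
  linarith

/-- The standard complex Gaussian measure `π⁻¹ e^{-|z|²} dx dy`. -/
noncomputable def complexGaussian : Measure ℂ :=
  (volume : Measure ℂ).withDensity fun z => ENNReal.ofReal (Real.exp (-‖z‖ ^ 2) / Real.pi)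

lemma integral_complexGaussian {E : Type*} [NormedAddCommGroup E] [NormedSpace ℝ E]
    (g : ℂ → E) :
    ∫ z, g z ∂complexGaussian = ∫ z, (Real.exp (-‖z‖ ^ 2) / Real.pi) • g z := by
  rw [complexGaussian, integral_withDensity_eq_integral_toReal_smul (by fun_prop) (by simp)]
  congr with z
  rw [ENNReal.toReal_ofReal (by positivity)]

lemma integral_norm_rpow_complexGaussian {q : ℝ} (hq : 0 ≤ q) :
    ∫ z, ‖z‖ ^ q ∂complexGaussian = Real.Gamma (q / 2 + 1) := by
  have h := Complex.integral_rpow_mul_exp_neg_rpow (p := 2) (q := q) (by norm_num) (by linarith)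
  have h2 : ∀ z : ℂ, (Real.exp (-‖z‖ ^ 2) / Real.pi) • ‖z‖ ^ q =
      Real.pi⁻¹ * (‖z‖ ^ q * Real.exp (-‖z‖ ^ (2 : ℝ))) := by
    intro z
    rw [smul_eq_mul, Real.rpow_two]
    ring
  rw [integral_complexGaussian]
  simp_rw [h2]
  rw [integral_const_mul, h, show (q + 2) / 2 = q / 2 + 1 by ring]
  field_simp

lemma integrable_norm_rpow_complexGaussian {q : ℝ} (hq : 0 ≤ q) :
    Integrable (fun z => ‖z‖ ^ q) complexGaussian := by
  refine .of_integral_ne_zero ?_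
  rw [integral_norm_rpow_complexGaussian hq]
  exact (Real.Gamma_pos_of_pos (by linarith)).ne'

lemma isProbabilityMeasure_complexGaussian : IsProbabilityMeasure complexGaussian := by
  have h := integral_norm_rpow_complexGaussian le_rfl
  simp only [Real.rpow_zero, integral_const, smul_eq_mul, mul_one, zero_div, zero_add,
    Real.Gamma_one, Measure.real, ENNReal.toReal_eq_one_iff] at h
  exact ⟨h⟩

lemma charFun_complexGaussian (t : ℂ) :
    charFun complexGaussian t = Complex.exp (-‖t‖ ^ 2 / 4) := by
  have h := GaussianFourier.integral_cexp_neg_mul_sq_norm_add (b := 1) (by simp) Complex.I t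
  rw [charFun_apply, integral_complexGaussian]
  have h2 : ∀ z : ℂ, (Real.exp (-‖z‖ ^ 2) / Real.pi) • Complex.exp (inner ℝ z t * Complex.I) =
      (Real.pi : ℂ)⁻¹ * Complex.exp (-1 * ‖z‖ ^ 2 + Complex.I * (inner ℝ t z : ℝ)) := by
    intro z
    rw [Complex.exp_add, real_inner_comm, Complex.real_smul]
    push_cast
    ring_nf
  simp_rw [h2]
  rw [integral_const_mul, h]
  have : (Real.pi : ℂ) ≠ 0 := by exact_mod_cast Real.pi_ne_zero
  simp [Complex.finrank_real_complex, field]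

/-- The law of `√(α/n) ∑ᵢ zᵢ` under the product Bergman measure. -/
noncomputable def bergmanSumLaw (n : ℕ) (α : ℝ) : Measure ℂ :=
  (bergmanMeasurePi n α).map fun z => (Real.sqrt (α / n) : ℂ) * ∑ i, z i

lemma integral_bergmanSumLaw {E : Type*} [NormedAddCommGroup E] [NormedSpace ℝ E] {g : ℂ → E}
    (hg : StronglyMeasurable g) (n : ℕ) (α : ℝ) :
    ∫ w, g w ∂(bergmanSumLaw n α) =
      ∫ z : Fin n → ℂ, g ((Real.sqrt (α / n) : ℂ) * ∑ i, z i) ∂(bergmanMeasurePi n α) :=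
  integral_map (by fun_prop) hg.aestronglyMeasurable

lemma isProbabilityMeasure_bergmanMeasurePi {α : ℝ} (hα : 1 < α) (n : ℕ) :
    IsProbabilityMeasure (bergmanMeasurePi n α) := by
  have := isProbabilityMeasure_bergmanMeasure hα
  unfold bergmanMeasurePi
  infer_instance

lemma isProbabilityMeasure_bergmanSumLaw {α : ℝ} (hα : 1 < α) (n : ℕ) :
    IsProbabilityMeasure (bergmanSumLaw n α) := by
  have := isProbabilityMeasure_bergmanMeasurePi hα n
  exact Measure.isProbabilityMeasure_map (by fun_prop)

lemma inner_ofReal_mul_sum {n : ℕ} (c : ℝ) (z : Fin n → ℂ) (t : ℂ) :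
    inner ℝ ((c : ℂ) * ∑ i, z i) t = ∑ i, c * inner ℝ (z i) t := by
  rw [← Complex.real_smul, real_inner_smul_left, sum_inner, Finset.mul_sum]

lemma charFun_bergmanSumLaw {α : ℝ} (hα : 1 < α) (n : ℕ) (t : ℂ) :
    charFun (bergmanSumLaw n α) t =
      charFun ((bergmanMeasure α).map fun z => inner ℝ z t) (Real.sqrt (α / n)) ^ n := by
  have := isProbabilityMeasure_bergmanMeasure hα
  rw [charFun_apply, integral_bergmanSumLaw (Continuous.stronglyMeasurable (by fun_prop)),
    charFun_apply, integral_map (by fun_prop) (by fun_prop)]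
  simp_rw [inner_ofReal_mul_sum, Complex.ofReal_sum, Finset.sum_mul, Complex.exp_sum]
  have h := integral_fintype_prod_eq_pow (ι := Fin n) (μ := bergmanMeasure α)
    fun z => Complex.exp (((Real.sqrt (α / n) * inner ℝ z t : ℝ) : ℂ) * Complex.I)
  rw [Fintype.card_fin] at h
  rw [bergmanMeasurePi, h]
  simp

lemma tendsto_charFun_bergmanSumLaw {α : ℝ} (hα : 1 < α) (t : ℂ) :
    Tendsto (fun n => charFun (bergmanSumLaw n α) t) atTop
      (nhds (charFun complexGaussian t)) := by
  have hα0 : 0 < α := by linarith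
  have := isProbabilityMeasure_bergmanMeasure hα
  have (n : ℕ) := isProbabilityMeasure_bergmanSumLaw hα n
  rw [charFun_complexGaussian]
  rcases eq_or_ne t 0 with rfl | ht
  · simp
  have ht' : 0 < ‖t‖ := norm_pos_iff.2 ht
  have hs : 0 < Real.sqrt (2 * α) := by positivity
  set k : ℝ := Real.sqrt (2 * α) / ‖t‖ with hk
  have hk2 : k ^ 2 * (‖t‖ ^ 2 / (2 * α)) = 1 := by
    rw [hk, div_pow, Real.sq_sqrt (by positivity)]
    field_simp
  have h := ProbabilityTheory.tendsto_charFun_inv_sqrt_mul_pow (P := bergmanMeasure α)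
    (X := fun z => k * inner ℝ z t) (by fun_prop)
    (by rw [integral_const_mul, integral_inner_bergmanMeasure hα, mul_zero])
    (by simp only [Pi.pow_apply, mul_pow]
        rw [integral_const_mul, integral_inner_sq_bergmanMeasure hα, hk2])
    (‖t‖ / Real.sqrt 2)
  convert h using 2 with n
  · rw [charFun_bergmanSumLaw hα, charFun_map_mul_comp (by fun_prop)]
    congr 2
    rw [hk, Real.sqrt_mul (by norm_num), Real.sqrt_div hα0.le]
    field_simp
  · congr 1
    norm_cast
    rw [div_pow, Real.sq_sqrt (by norm_num)]
    ring

lemma integral_exp_inner_bergmanSumLaw {α : ℝ} (hα : 1 < α) (n : ℕ) (s : ℝ) (t : ℂ) :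
    ∫ w, Real.exp (s * inner ℝ w t) ∂(bergmanSumLaw n α) =
      ProbabilityTheory.mgf (fun z => inner ℝ z t) (bergmanMeasure α)
        (s * Real.sqrt (α / n)) ^ n := by
  have := isProbabilityMeasure_bergmanMeasure hα
  rw [integral_bergmanSumLaw (Continuous.stronglyMeasurable (by fun_prop))]
  simp_rw [inner_ofReal_mul_sum, Finset.mul_sum, Real.exp_sum]
  have h := integral_fintype_prod_eq_pow (ι := Fin n) (μ := bergmanMeasure α)
    fun z => Real.exp (s * (Real.sqrt (α / n) * inner ℝ z t))
  rw [Fintype.card_fin] at h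
  rw [bergmanMeasurePi, h, ProbabilityTheory.mgf]
  simp_rw [mul_assoc]

lemma hasSubgaussianMGF_inner_bergmanMeasure {α : ℝ} (hα : 1 < α) {t : ℂ} (ht : ‖t‖ = 1) :
    ProbabilityTheory.HasSubgaussianMGF (fun z => inner ℝ z t) 1 (bergmanMeasure α) := by
  have := isProbabilityMeasure_bergmanMeasure hα
  have h := ProbabilityTheory.hasSubgaussianMGF_of_mem_Icc_of_integral_eq_zero
    (μ := bergmanMeasure α) (X := fun z => inner ℝ z t) (a := -1) (b := 1) (by fun_prop)
    (by
      filter_upwards [ae_bergmanMeasure_norm_lt_one α] with z hz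
      have := abs_real_inner_le_norm z t
      rw [ht, mul_one] at this
      exact abs_le.1 (this.trans hz.le))
    (integral_inner_bergmanMeasure hα t)
  convert h
  ext
  norm_num

lemma integral_exp_inner_bergmanSumLaw_le {α : ℝ} (hα : 1 < α) (n : ℕ) (s : ℝ) {t : ℂ}
    (ht : ‖t‖ = 1) :
    ∫ w, Real.exp (s * inner ℝ w t) ∂(bergmanSumLaw n α) ≤ Real.exp (s ^ 2 * α / 2) := by
  have hα0 : 0 < α := by linarith
  rw [integral_exp_inner_bergmanSumLaw hα]
  refine (pow_le_pow_left₀ ProbabilityTheory.mgf_nonneg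
    ((hasSubgaussianMGF_inner_bergmanMeasure hα ht).mgf_le _) n).trans ?_
  rw [← Real.exp_nat_mul, mul_pow, Real.sq_sqrt (by positivity)]
  rcases n.eq_zero_or_pos with rfl | hn
  · simp
    positivity
  · refine Real.exp_le_exp.2 (le_of_eq ?_)
    have : (n : ℝ) ≠ 0 := by positivity
    simp [field]

lemma integrable_exp_inner_bergmanSumLaw {α : ℝ} (hα : 1 < α) (n : ℕ) (s : ℝ) {t : ℂ}
    (ht : ‖t‖ = 1) :
    Integrable (fun w => Real.exp (s * inner ℝ w t)) (bergmanSumLaw n α) := by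
  have := isProbabilityMeasure_bergmanMeasure hα
  refine .of_integral_ne_zero ?_
  rw [integral_exp_inner_bergmanSumLaw hα]
  exact pow_ne_zero _ (ProbabilityTheory.mgf_pos
    ((hasSubgaussianMGF_inner_bergmanMeasure hα ht).integrable_exp_mul _)).ne'

lemma rpow_le_rpow_self_mul_exp {q x : ℝ} (hq : 0 < q) (hx : 0 ≤ x) :
    x ^ q ≤ q ^ q * Real.exp x := by
  have h : x / q ≤ Real.exp (x / q) := by linarith [Real.add_one_le_exp (x / q)]
  calc x ^ q = q ^ q * (x / q) ^ q := by
        rw [← Real.mul_rpow hq.le (by positivity), mul_div_cancel₀ _ hq.ne']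
    _ ≤ q ^ q * Real.exp (x / q) ^ q := by gcongr
    _ = q ^ q * Real.exp x := by rw [← Real.exp_mul, div_mul_cancel₀ _ hq.ne']

lemma exp_norm_le_sum_exp_inner (w : ℂ) :
    Real.exp ‖w‖ ≤ Real.exp (2 * inner ℝ w 1) + Real.exp (-2 * inner ℝ w 1) +
      (Real.exp (2 * inner ℝ w Complex.I) + Real.exp (-2 * inner ℝ w Complex.I)) := by
  have key : ∀ a : ℝ, Real.exp (2 * |a|) ≤ Real.exp (2 * a) + Real.exp (-2 * a) := by
    intro a
    rcases abs_cases a with ⟨h, -⟩ | ⟨h, -⟩ <;> rw [h]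
    · linarith [Real.exp_pos (-2 * a)]
    · rw [mul_neg, ← neg_mul]
      linarith [Real.exp_pos (2 * a)]
  have h1 := Complex.norm_le_abs_re_add_abs_im w
  have h2 : Real.exp ‖w‖ ≤ Real.exp (2 * |w.re|) + Real.exp (2 * |w.im|) := by
    rcases le_total |w.re| |w.im| with h | h
    · have : Real.exp ‖w‖ ≤ Real.exp (2 * |w.im|) := Real.exp_le_exp.2 (by linarith)
      linarith [Real.exp_pos (2 * |w.re|)]
    · have : Real.exp ‖w‖ ≤ Real.exp (2 * |w.re|) := Real.exp_le_exp.2 (by linarith)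
      linarith [Real.exp_pos (2 * |w.im|)]
  have h3 : inner ℝ w 1 = w.re := by simp [Complex.inner]
  have h4 : inner ℝ w Complex.I = w.im := by simp [Complex.inner]
  rw [h3, h4]
  linarith [key w.re, key w.im]

lemma integrable_exp_norm_bergmanSumLaw {α : ℝ} (hα : 1 < α) (n : ℕ) :
    Integrable (fun w => Real.exp ‖w‖) (bergmanSumLaw n α) := by
  have h1 (s : ℝ) := integrable_exp_inner_bergmanSumLaw hα n s (t := 1) (by simp)
  have hI (s : ℝ) := integrable_exp_inner_bergmanSumLaw hα n s (t := Complex.I) (by simp)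
  refine (((h1 2).add (h1 (-2))).add ((hI 2).add (hI (-2)))).mono'
    (Continuous.aestronglyMeasurable (by fun_prop)) (ae_of_all _ fun w => ?_)
  rw [Real.norm_of_nonneg (Real.exp_pos _).le]
  exact exp_norm_le_sum_exp_inner w

lemma integral_exp_norm_bergmanSumLaw_le {α : ℝ} (hα : 1 < α) (n : ℕ) :
    ∫ w, Real.exp ‖w‖ ∂(bergmanSumLaw n α) ≤ 4 * Real.exp (2 * α) := by
  have h1 (s : ℝ) := integrable_exp_inner_bergmanSumLaw hα n s (t := 1) (by simp)
  have hI (s : ℝ) := integrable_exp_inner_bergmanSumLaw hα n s (t := Complex.I) (by simp)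
  refine (integral_mono (integrable_exp_norm_bergmanSumLaw hα n)
    (((h1 2).add (h1 (-2))).add ((hI 2).add (hI (-2)))) exp_norm_le_sum_exp_inner).trans ?_
  rw [integral_add' ((h1 2).add (h1 (-2))) ((hI 2).add (hI (-2))),
    integral_add' (h1 2) (h1 (-2)), integral_add' (hI 2) (hI (-2))]
  have b1 (s : ℝ) := integral_exp_inner_bergmanSumLaw_le hα n s (t := 1) (by simp)
  have bI (s : ℝ) := integral_exp_inner_bergmanSumLaw_le hα n s (t := Complex.I) (by simp)
  have e1 : (2 : ℝ) ^ 2 * α / 2 = 2 * α := by ring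
  have e2 : (-2 : ℝ) ^ 2 * α / 2 = 2 * α := by ring
  have := b1 2
  have := b1 (-2)
  have := bI 2
  have := bI (-2)
  rw [e1] at *
  rw [e2] at *
  linarith

lemma integrable_norm_rpow_bergmanSumLaw {α q : ℝ} (hα : 1 < α) (hq : 0 < q) (n : ℕ) :
    Integrable (fun w => ‖w‖ ^ q) (bergmanSumLaw n α) := by
  refine ((integrable_exp_norm_bergmanSumLaw hα n).const_mul (q ^ q)).mono'
    (Measurable.aestronglyMeasurable (by fun_prop)) (ae_of_all _ fun w => ?_)
  rw [Real.norm_of_nonneg (by positivity)]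
  exact rpow_le_rpow_self_mul_exp hq (norm_nonneg w)

lemma integral_norm_rpow_bergmanSumLaw_le {α q : ℝ} (hα : 1 < α) (hq : 0 < q) (n : ℕ) :
    ∫ w, ‖w‖ ^ q ∂(bergmanSumLaw n α) ≤ q ^ q * (4 * Real.exp (2 * α)) := by
  refine (integral_mono (integrable_norm_rpow_bergmanSumLaw hα hq n)
    ((integrable_exp_norm_bergmanSumLaw hα n).const_mul (q ^ q))
    fun w => rpow_le_rpow_self_mul_exp hq (norm_nonneg w)).trans ?_
  rw [integral_const_mul]
  gcongr
  exact integral_exp_norm_bergmanSumLaw_le hα n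

lemma abs_integral_sub_integral_min_le {Ω : Type*} {mΩ : MeasurableSpace Ω} {μ : Measure Ω}
    {f : Ω → ℝ} {R C : ℝ} (hR : 0 < R) (hf0 : 0 ≤ f) (hf : Integrable f μ)
    (hf2 : Integrable (fun x => f x ^ 2) μ) (hC : ∫ x, f x ^ 2 ∂μ ≤ C) :
    |∫ x, f x ∂μ - ∫ x, min (f x) R ∂μ| ≤ C / R := by
  have hmin : Integrable (fun x => min (f x) R) μ := by
    refine hf.mono' (hf.aestronglyMeasurable.inf aestronglyMeasurable_const)
      (ae_of_all _ fun x => ?_)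
    rw [Real.norm_of_nonneg (le_min (hf0 x) hR.le)]
    exact min_le_left _ _
  rw [← integral_sub hf hmin, abs_of_nonneg (integral_nonneg fun x => by simp)]
  refine (integral_mono (hf.sub hmin) (hf2.div_const R) fun x => ?_).trans ?_
  · simp only [Pi.sub_apply]
    rw [le_div_iff₀ hR]
    rcases le_total (f x) R with h | h
    · simp [h]
      positivity
    · rw [min_eq_right h]
      nlinarith [hf0 x]
  · rw [integral_div]
    gcongr

/-- Weak convergence together with bounded second moments of a nonnegative continuous function
implies convergence of its integrals. -/
lemma tendsto_integral_of_tendsto_of_integral_sq_le {Ω : Type*} [MeasurableSpace Ω]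
    [TopologicalSpace Ω] [OpensMeasurableSpace Ω] {ν : ℕ → ProbabilityMeasure Ω}
    {ν₀ : ProbabilityMeasure Ω} (hν : Tendsto ν atTop (nhds ν₀)) {f : Ω → ℝ}
    (hcont : Continuous f) (hf0 : 0 ≤ f) (hf : ∀ n, Integrable f (ν n : Measure Ω))
    (hf2 : ∀ n, Integrable (fun x => f x ^ 2) (ν n : Measure Ω))
    (hg : Integrable f (ν₀ : Measure Ω)) (hg2 : Integrable (fun x => f x ^ 2) (ν₀ : Measure Ω))
    {C : ℝ} (hC : ∀ n, ∫ x, f x ^ 2 ∂(ν n : Measure Ω) ≤ C) :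
    Tendsto (fun n => ∫ x, f x ∂(ν n : Measure Ω)) atTop
      (nhds (∫ x, f x ∂(ν₀ : Measure Ω))) := by
  set D : ℝ := max C (∫ x, f x ^ 2 ∂(ν₀ : Measure Ω))
  have hD0 : 0 ≤ D := le_max_of_le_right (integral_nonneg fun x => sq_nonneg _)
  rw [Metric.tendsto_atTop]
  intro ε hε
  set R : ℝ := 3 * (D + 1) / ε with hRdef
  have hR : 0 < R := by positivity
  have hDR : D / R < ε / 3 := by
    rw [hRdef]
    field_simp
    linarith
  let F : BoundedContinuousFunction Ω ℝ :=
    BoundedContinuousFunction.ofNormedAddCommGroup (fun x => min (f x) R) (by fun_prop) R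
      fun x => by
        rw [Real.norm_of_nonneg (le_min (hf0 x) hR.le)]
        exact min_le_right _ _
  have hlim := ProbabilityMeasure.tendsto_iff_forall_integral_tendsto.1 hν F
  obtain ⟨N, hN⟩ := Metric.tendsto_atTop.1 hlim (ε / 3) (by positivity)
  refine ⟨N, fun n hn => ?_⟩
  have h1 := abs_integral_sub_integral_min_le (C := D) hR hf0 (hf n) (hf2 n)
    ((hC n).trans (le_max_left _ _))
  have h2 := abs_integral_sub_integral_min_le (C := D) hR hf0 hg hg2 (le_max_right _ _)
  have h3 := hN n hn
  rw [Real.dist_eq] at h3 ⊢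
  simp only [F, BoundedContinuousFunction.coe_ofNormedAddCommGroup] at h3
  rw [abs_lt] at h3 ⊢
  rw [abs_le] at h1 h2
  constructor <;> linarith [h1.1, h1.2, h2.1, h2.2, h3.1, h3.2]

/-- Convergence of the absolute moments of `√(α/n) ∑ᵢ zᵢ` to those of the complex Gaussian. -/
lemma tendsto_integral_norm_rpow_bergmanSumLaw {α q : ℝ} (hα : 1 < α) (hq : 0 < q) :
    Tendsto (fun n => ∫ w, ‖w‖ ^ q ∂(bergmanSumLaw n α)) atTop
      (nhds (Real.Gamma (q / 2 + 1))) := by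
  let ν (n : ℕ) : ProbabilityMeasure ℂ :=
    ⟨bergmanSumLaw n α, isProbabilityMeasure_bergmanSumLaw hα n⟩
  let ν₀ : ProbabilityMeasure ℂ := ⟨complexGaussian, isProbabilityMeasure_complexGaussian⟩
  have hν : Tendsto ν atTop (nhds ν₀) :=
    ProbabilityMeasure.tendsto_iff_tendsto_charFun.2 (tendsto_charFun_bergmanSumLaw hα)
  have hsq : (fun w : ℂ => (‖w‖ ^ q) ^ 2) = fun w => ‖w‖ ^ (q * 2) := by
    ext w
    rw [Real.rpow_mul (norm_nonneg w), Real.rpow_two]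
  have hq2 : 0 < q * 2 := by positivity
  rw [← integral_norm_rpow_complexGaussian hq.le]
  refine tendsto_integral_of_tendsto_of_integral_sq_le hν
    (continuous_norm.rpow_const fun _ => Or.inr hq.le) (fun w => by positivity)
    (integrable_norm_rpow_bergmanSumLaw hα hq) (fun n => ?_)
    (integrable_norm_rpow_complexGaussian hq.le) ?_
    (C := (q * 2) ^ (q * 2) * (4 * Real.exp (2 * α))) fun n => ?_
  · rw [hsq]
    exact integrable_norm_rpow_bergmanSumLaw hα hq2 n
  · rw [hsq]
    exact integrable_norm_rpow_complexGaussian hq2.le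
  · rw [hsq]
    exact integral_norm_rpow_bergmanSumLaw_le hα hq2 n

/-- The central-limit computation: with `p_{α,n}(𝐳) = √(α/n) ∑ᵢ zᵢ`, one has
`lim_{n→∞} ‖p_{α,n}^m‖_{A_α^p(𝔻ⁿ)} = Γ(mp/2 + 1)^{1/p}`. -/
theorem clt_moment_limit
    (m : ℕ) (hm : 0 < m) (p α : ℝ) (hp : 0 < p) (hα : 1 < α) :
    Tendsto
      (fun n : ℕ =>
        (∫ z : Fin n → ℂ,
            ‖(Real.sqrt (α / n) : ℂ) * ∑ i, z i‖ ^ ((m : ℝ) * p)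
          ∂(bergmanMeasurePi n α)) ^ (1 / p))
      atTop (nhds (Real.Gamma ((m : ℝ) * p / 2 + 1) ^ (1 / p))) := by
  have hq : 0 < (m : ℝ) * p := by positivity
  have h := tendsto_integral_norm_rpow_bergmanSumLaw hα hq
  simp_rw [integral_bergmanSumLaw (g := fun w : ℂ => ‖w‖ ^ ((m : ℝ) * p))
    (Measurable.stronglyMeasurable (by fun_prop))] at h
  exact h.rpow_const (Or.inr (by positivity))
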